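/- arXiv:2010.12958 — 2 statements merged into one kernel-verified Lean document; each statement's English description precedes it below -/
import Mathlib

section
/- Let G be a discrete group, T an automorphism of G, and H a normal subgroup of finite index in G such that T|_H = Id, the center Z(H) of H is finitely generated, and Sub^c_H is closed in Sub_H. Then Sub^c_G is closed in Sub_G, and T acts distally on Sub^c_G if and only if T^m = Id for some integer m ≥ 1. -/
/-- The Chabauty topology on the space of subgroups of a discrete group `G`:
it is generated by the sub-basic sets `{H | H ∩ K = ∅}` for `K` finite (= compact in a
discrete group) and `{H | H ∩ U ≠ ∅}` for arbitrary `U` (= open in a discrete group). -/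
instance chabautyTopology (G : Type*) [Group G] : TopologicalSpace (Subgroup G) :=
  TopologicalSpace.generateFrom
    ({S | ∃ K : Set G, K.Finite ∧ S = {H : Subgroup G | (H : Set G) ∩ K = ∅}} ∪
     {S | ∃ U : Set G, S = {H : Subgroup G | ((H : Set G) ∩ U).Nonempty}})

/-- `Sub^c_G`: the set of cyclic subgroups of a (discrete) group `G`. -/
def cyclicSubgroups (G : Type*) [Group G] : Set (Subgroup G) :=
  {H : Subgroup G | ∃ x : G, H = Subgroup.zpowers x}

/-- `Sub^a_G`: the set of abelian subgroups of a (discrete) group `G`. -/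
def abelianSubgroups (G : Type*) [Group G] : Set (Subgroup G) :=
  {H : Subgroup G | ∀ a ∈ H, ∀ b ∈ H, a * b = b * a}

/-- The image of a subgroup under the `n`-th power (`n : ℤ`) of an automorphism. -/
def autMap {G : Type*} [Group G] (T : MulAut G) (n : ℤ) (H : Subgroup G) : Subgroup G :=
  Subgroup.map (T ^ n).toMonoidHom H

/-- The orbit of a pair of subgroups under the powers of an automorphism. -/
def orbitPairs {G : Type*} [Group G] (T : MulAut G) (A B : Subgroup G) :
    Set (Subgroup G × Subgroup G) :=
  Set.range fun n : ℤ => (autMap T n A, autMap T n B)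

/-- The automorphism `T` acts distally on the (`T`-invariant) subset `Y` of `Sub_G`:
for distinct `A, B ∈ Y`, the closure of the orbit of `(A, B)` does not meet
the diagonal of `Y`. -/
def ActsDistallyOn {G : Type*} [Group G] (T : MulAut G) (Y : Set (Subgroup G)) : Prop :=
  ∀ A ∈ Y, ∀ B ∈ Y, A ≠ B → ∀ C ∈ Y, (C, C) ∉ closure (orbitPairs T A B)

/-- The automorphism `T` acts expansively on the compact (`T`-invariant) subset `Y` of
`Sub_G`: there is a neighbourhood `W` of the diagonal (an entourage for the unique
uniformity of the compact Hausdorff space `Y`, equivalently `d < δ` for an expansivity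
constant `δ` of a compatible metric `d`) such that any two distinct points of `Y` are
separated outside of `W` by some power of `T`. -/
def ActsExpansivelyOn {G : Type*} [Group G] (T : MulAut G) (Y : Set (Subgroup G)) : Prop :=
  ∃ W : Set (Subgroup G × Subgroup G), IsOpen W ∧ (∀ A ∈ Y, (A, A) ∈ W) ∧
    ∀ A ∈ Y, ∀ B ∈ Y, A ≠ B → ∃ n : ℤ, (autMap T n A, autMap T n B) ∉ W

/-- An automorphism `T` of a discrete group `G` belongs to class (NC) if for every
nontrivial cyclic subgroup `A` of `G`, no sequence `T^{n_k}(A)` converges to the trivial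
subgroup in the Chabauty topology. -/
def ClassNC {G : Type*} [Group G] (T : MulAut G) : Prop :=
  ∀ A ∈ cyclicSubgroups G, A ≠ ⊥ →
    ∀ n : ℕ → ℤ, ¬ Filter.Tendsto (fun k => autMap T (n k) A) Filter.atTop (nhds ⊥)

/-- A group is polycyclic if it has a finite subnormal series with cyclic quotients. -/
def IsPolycyclic (G : Type*) [Group G] : Prop :=
  ∃ (k : ℕ) (s : Fin (k + 1) → Subgroup G),
    s 0 = ⊤ ∧ s (Fin.last k) = ⊥ ∧
    ∀ i : Fin k, s i.succ ≤ s i.castSucc ∧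
      ∃ hn : ((s i.succ).subgroupOf (s i.castSucc)).Normal,
        haveI := hn
        IsCyclic (↥(s i.castSucc) ⧸ (s i.succ).subgroupOf (s i.castSucc))

/-!
A net of subgroups of a discrete group converges to `A` in the Chabauty topology iff each group
element eventually belongs to its terms exactly when it belongs to `A`.

*Closedness.* If `A` is a limit of cyclic subgroups then `A ∩ H` is a limit of cyclic subgroups
of `H`, hence cyclic, so `A` is finitely generated. The subgroups containing a finitely generated
`A` form a neighbourhood of it, so `A` lies in a cyclic group.

*Distality.* The positive powers of `T` have fixed subgroups of finite index. Choose one, `R`, for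
which this index is minimal; every `R`-periodic element is then fixed by `R`. Some `k > 0` has all
`k`-th powers fixed by `R`, and a cyclic group has only finitely many `k`-th roots of a given
element. Hence `Rⁿ⟨x⟩ → ⟨x⟩ ∩ Fix R` as `|n| → ∞`. As `R` fixes the limit, distality forces
`⟨x⟩ ⊆ Fix R` for every `x`, that is, `R = 1`.
-/

open Filter Topology

section Chabauty

variable {G G' : Type*} [Group G] [Group G']

theorem tendsto_nhds_subgroup_iff {ι : Type*} {u : ι → Subgroup G} {l : Filter ι}
    {A : Subgroup G} : Tendsto u l (𝓝 A) ↔ ∀ g, ∀ᶠ i in l, (g ∈ u i ↔ g ∈ A) := by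
  rw [TopologicalSpace.tendsto_nhds_generateFrom_iff]
  refine ⟨fun h g ↦ ?_, ?_⟩
  · by_cases hg : g ∈ A
    · filter_upwards [h _ (.inr ⟨{g}, rfl⟩) ⟨g, hg, rfl⟩] with i ⟨g', hg', hgg'⟩
      rw [Set.mem_singleton_iff] at hgg'
      exact iff_of_true (hgg' ▸ hg') hg
    · filter_upwards [h _ (.inl ⟨{g}, Set.finite_singleton g, rfl⟩)
        (Set.inter_singleton_eq_empty.mpr hg)] with i hi
      exact iff_of_false (Set.inter_singleton_eq_empty.mp hi) hg
  · rintro h _ (⟨K, hK, rfl⟩ | ⟨U, rfl⟩) hA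
    · filter_upwards [hK.eventually_all.mpr fun g _ ↦ h g] with i hi
      refine Set.eq_empty_of_forall_notMem fun g hg ↦ ?_
      exact (Set.eq_empty_iff_forall_notMem.mp hA) g ⟨(hi g hg.2).mp hg.1, hg.2⟩
    · obtain ⟨g, hgA, hgU⟩ := hA
      filter_upwards [h g] with i hi using ⟨g, hi.mpr hgA, hgU⟩

theorem eventually_mem_iff_mem (A : Subgroup G) (g : G) :
    ∀ᶠ C in 𝓝 A, (g ∈ C ↔ g ∈ A) :=
  tendsto_nhds_subgroup_iff.mp tendsto_id g

instance t2Space_subgroup : T2Space (Subgroup G) := by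
  refine t2_iff_nhds.mpr fun {A B} _ ↦ Subgroup.ext fun g ↦ ?_
  have hA : ∀ᶠ C in 𝓝 A ⊓ 𝓝 B, (g ∈ C ↔ g ∈ A) :=
    (eventually_mem_iff_mem A g).filter_mono inf_le_left
  have hB : ∀ᶠ C in 𝓝 A ⊓ 𝓝 B, (g ∈ C ↔ g ∈ B) :=
    (eventually_mem_iff_mem B g).filter_mono inf_le_right
  obtain ⟨C, hCA, hCB⟩ := (hA.and hB).exists
  exact hCA.symm.trans hCB

theorem continuous_subgroup_comap (f : G →* G') :
    Continuous fun C : Subgroup G' ↦ C.comap f :=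
  continuous_iff_continuousAt.mpr fun A ↦
    tendsto_nhds_subgroup_iff.mpr fun g ↦ eventually_mem_iff_mem A (f g)

theorem eventually_le_of_fg {A : Subgroup G} (hA : A.FG) : ∀ᶠ C in 𝓝 A, A ≤ C := by
  obtain ⟨S, rfl⟩ := hA
  filter_upwards [S.finite_toSet.eventually_all.mpr fun g _ ↦ eventually_mem_iff_mem _ g]
    with C hC
  exact (Subgroup.closure_le C).mpr fun g hg ↦ (hC g hg).mpr (Subgroup.subset_closure hg)

end Chabauty

section CyclicSubgroups

variable {G : Type*} [Group G]

theorem mem_cyclicSubgroups_iff_isCyclic {A : Subgroup G} :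
    A ∈ cyclicSubgroups G ↔ IsCyclic A := by
  rw [Subgroup.isCyclic_iff_exists_zpowers_eq_top]
  exact exists_congr fun _ ↦ eq_comm

theorem mem_cyclicSubgroups_of_le {A C : Subgroup G} (hC : C ∈ cyclicSubgroups G)
    (hAC : A ≤ C) : A ∈ cyclicSubgroups G := by
  rw [mem_cyclicSubgroups_iff_isCyclic] at hC ⊢
  exact Subgroup.isCyclic_of_le hAC

theorem subgroupOf_mem_cyclicSubgroups {C : Subgroup G} (hC : C ∈ cyclicSubgroups G)
    (H : Subgroup G) : C.subgroupOf H ∈ cyclicSubgroups H := by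
  rw [mem_cyclicSubgroups_iff_isCyclic] at hC ⊢
  exact isCyclic_of_injective (H.subtype.subgroupComap C) fun a b hab ↦
    Subtype.ext (Subtype.ext (congrArg (fun c : C ↦ (c : G)) hab))

theorem subgroup_fg_of_isFiniteRelIndex {K A : Subgroup G} [K.IsFiniteRelIndex A]
    (hKA : K ≤ A) (hK : K.FG) : A.FG := by
  let R : Set G := Set.range fun q : A ⧸ K.subgroupOf A ↦ (q.out : G)
  have hR : (Subgroup.closure R).FG :=
    (Subgroup.fg_iff _).mpr ⟨R, rfl, Set.finite_range _⟩
  suffices A = K ⊔ Subgroup.closure R from this ▸ hK.sup hR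
  refine le_antisymm (fun a ha ↦ ?_) (sup_le hKA ?_)
  · let r : A := (QuotientGroup.mk ⟨a, ha⟩ : A ⧸ K.subgroupOf A).out
    have hr : (r : G) ∈ Subgroup.closure R := Subgroup.subset_closure ⟨_, rfl⟩
    have hmk : (r : A ⧸ K.subgroupOf A) = (⟨a, ha⟩ : A) := QuotientGroup.out_eq' _
    have hra : (r : G)⁻¹ * a ∈ K := Subgroup.mem_subgroupOf.mp (QuotientGroup.eq.mp hmk)
    rw [← mul_inv_cancel_left (r : G) a]
    exact mul_mem (Subgroup.mem_sup_right hr) (Subgroup.mem_sup_left hra)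
  · rw [Subgroup.closure_le]
    rintro _ ⟨q, rfl⟩
    exact q.out.2

theorem fg_of_subgroupOf_mem_cyclicSubgroups {A H : Subgroup G} [H.FiniteIndex]
    (h : A.subgroupOf H ∈ cyclicSubgroups H) : A.FG := by
  obtain ⟨y, hy⟩ := h
  have hAH : A ⊓ H = Subgroup.closure {(y : G)} := by
    rw [← Subgroup.subgroupOf_map_subtype, hy, MonoidHom.map_zpowers,
      Subgroup.zpowers_eq_closure, Subgroup.subtype_apply]
  have : (A ⊓ H).IsFiniteRelIndex A := by
    rw [Subgroup.isFiniteRelIndex_iff_finiteIndex, Subgroup.inf_subgroupOf_left]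
    infer_instance
  exact subgroup_fg_of_isFiniteRelIndex inf_le_left
    ((Subgroup.fg_iff _).mpr ⟨_, hAH.symm, Set.finite_singleton _⟩)

theorem isClosed_cyclicSubgroups_of_finiteIndex (H : Subgroup G) [H.FiniteIndex]
    (hH : IsClosed (cyclicSubgroups H)) : IsClosed (cyclicSubgroups G) := by
  refine isClosed_of_closure_subset fun A hA ↦ ?_
  have hAH : A.subgroupOf H ∈ cyclicSubgroups H := hH.closure_eq ▸
    map_mem_closure (continuous_subgroup_comap H.subtype) hA fun C hC ↦
      subgroupOf_mem_cyclicSubgroups hC H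
  have hle : ∀ᶠ C in 𝓝 A, A ≤ C :=
    eventually_le_of_fg (fg_of_subgroupOf_mem_cyclicSubgroups hAH)
  obtain ⟨C, hC, hAC⟩ := ((mem_closure_iff_frequently.mp hA).and_eventually hle).exists
  exact mem_cyclicSubgroups_of_le hC hAC

end CyclicSubgroups

section FixedSubgroup

variable {G : Type*} [Group G]

/-- The subgroup of elements fixed by the automorphism `T`. -/
def fixedSubgroup (T : MulAut G) : Subgroup G :=
  T.toMonoidHom.eqLocus (MonoidHom.id G)

theorem mem_fixedSubgroup {T : MulAut G} {g : G} : g ∈ fixedSubgroup T ↔ T g = g :=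
  Iff.rfl

theorem fixedSubgroup_le_fixedSubgroup_zpow (T : MulAut G) (n : ℤ) :
    fixedSubgroup T ≤ fixedSubgroup (T ^ n) :=
  fun g hg ↦ MulAction.mem_fixedBy_zpow (show g ∈ MulAction.fixedBy G T from hg) n

theorem fixedSubgroup_le_fixedSubgroup_pow (T : MulAut G) (n : ℕ) :
    fixedSubgroup T ≤ fixedSubgroup (T ^ n) :=
  mod_cast fixedSubgroup_le_fixedSubgroup_zpow T n

theorem exists_pow_forall_fixedSubgroup_zpow_le (T : MulAut G)
    [(fixedSubgroup T).FiniteIndex] :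
    ∃ m : ℕ, 0 < m ∧
      ∀ n : ℤ, n ≠ 0 → fixedSubgroup ((T ^ m) ^ n) ≤ fixedSubgroup (T ^ m) := by
  obtain ⟨m, hm, hmin⟩ := (measure fun m : ℕ ↦ (fixedSubgroup (T ^ m)).index).wf.has_min
    {m | 0 < m} ⟨1, Nat.one_pos⟩
  have : (fixedSubgroup (T ^ m)).FiniteIndex :=
    Subgroup.finiteIndex_of_le (fixedSubgroup_le_fixedSubgroup_pow T m)
  refine ⟨m, hm, fun n hn ↦ ?_⟩
  have hle : fixedSubgroup (T ^ m) ≤ fixedSubgroup (T ^ (m * n.natAbs)) := by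
    rw [pow_mul]
    exact fixedSubgroup_le_fixedSubgroup_pow _ _
  have heq : fixedSubgroup (T ^ m) = fixedSubgroup (T ^ (m * n.natAbs)) :=
    hle.eq_of_not_lt fun hlt ↦
      hmin _ (Nat.mul_pos hm (Int.natAbs_pos.mpr hn)) (Subgroup.index_strictAnti hlt)
  calc fixedSubgroup ((T ^ m) ^ n)
      ≤ fixedSubgroup (((T ^ m) ^ n) ^ n.sign) := fixedSubgroup_le_fixedSubgroup_zpow _ _
    _ = fixedSubgroup (T ^ (m * n.natAbs)) := by
      rw [← zpow_mul, Int.mul_sign_self, zpow_natCast, ← pow_mul]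
    _ = fixedSubgroup (T ^ m) := heq.symm

theorem zpow_apply_injective {R : MulAut G} {g : G}
    (hg : ∀ n : ℤ, n ≠ 0 → g ∉ fixedSubgroup (R ^ n)) :
    Function.Injective fun n : ℤ ↦ (R ^ n) g := by
  intro i j (hij : (R ^ i) g = (R ^ j) g)
  by_contra hne
  refine hg (-j + i) (by lia) ?_
  rw [mem_fixedSubgroup, zpow_add, MulAut.mul_apply, hij, ← MulAut.mul_apply, ← zpow_add,
    neg_add_cancel, zpow_zero, MulAut.one_apply]

end FixedSubgroup

section Distal

variable {G : Type*} [Group G]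

theorem finite_setOf_mem_zpowers_pow_eq (x a : G) {k : ℕ} (hk : k ≠ 0) :
    {g : G | g ∈ Subgroup.zpowers x ∧ g ^ k = a}.Finite := by
  by_cases hx : IsOfFinOrder x
  · exact (finite_zpowers.mpr hx).subset fun g hg ↦ hg.1
  · refine Set.Subsingleton.finite ?_
    rintro _ ⟨⟨i, rfl⟩, hi⟩ _ ⟨⟨j, rfl⟩, hj⟩
    have hij : x ^ (i * k) = x ^ (j * k) := by
      simpa only [zpow_mul, zpow_natCast] using hi.trans hj.symm
    exact congrArg (x ^ ·) (mul_right_cancel₀ (Nat.cast_ne_zero.mpr hk)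
      (injective_zpow_iff_not_isOfFinOrder.mpr hx hij))

theorem exists_pow_mem_of_finiteIndex (H : Subgroup G) [H.FiniteIndex] :
    ∃ k : ℕ, k ≠ 0 ∧ ∀ g : G, g ^ k ∈ H :=
  ⟨H.normalCore.index, Subgroup.FiniteIndex.index_ne_zero,
    fun g ↦ H.normalCore_le (H.normalCore.pow_index_mem g)⟩

theorem mem_autMap_of_mem_fixedSubgroup {R : MulAut G} {A : Subgroup G} {g : G} (hgA : g ∈ A)
    (hg : g ∈ fixedSubgroup R) (n : ℤ) : g ∈ autMap R n A :=
  ⟨g, hgA, fixedSubgroup_le_fixedSubgroup_zpow R n hg⟩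

theorem autMap_eq_self_of_le_fixedSubgroup {R : MulAut G} {A : Subgroup G}
    (hA : A ≤ fixedSubgroup R) (n : ℤ) : autMap R n A = A := by
  refine le_antisymm ?_ fun g hg ↦ mem_autMap_of_mem_fixedSubgroup hg (hA hg) n
  rintro _ ⟨g, hg, rfl⟩
  have hfix : (R ^ n) g = g := fixedSubgroup_le_fixedSubgroup_zpow R n (hA hg)
  exact hfix.symm ▸ hg

theorem autMap_pow (T : MulAut G) (m : ℕ) (n : ℤ) (A : Subgroup G) :
    autMap (T ^ m) n A = autMap T (m * n) A := by
  rw [autMap, autMap, zpow_mul, zpow_natCast]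

theorem ActsDistallyOn.pow {T : MulAut G} {Y : Set (Subgroup G)} (hT : ActsDistallyOn T Y)
    (m : ℕ) : ActsDistallyOn (T ^ m) Y := by
  intro A hA B hB hAB C hC hCC
  refine hT A hA B hB hAB C hC (closure_mono ?_ hCC)
  rintro _ ⟨n, rfl⟩
  exact ⟨m * n, by simp only [autMap_pow]⟩

theorem finite_setOf_mem_autMap_zpowers {R : MulAut G} [(fixedSubgroup R).FiniteIndex]
    (hR : ∀ n : ℤ, n ≠ 0 → fixedSubgroup (R ^ n) ≤ fixedSubgroup R) {x f : G}
    (hf : f ∉ Subgroup.zpowers x ⊓ fixedSubgroup R) :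
    {n : ℤ | f ∈ autMap R n (Subgroup.zpowers x)}.Finite := by
  obtain ⟨k, hk, hpow⟩ := exists_pow_mem_of_finiteIndex (fixedSubgroup R)
  refine ((finite_setOf_mem_zpowers_pow_eq x (f ^ k) hk).biUnion'
    (t := fun g _ ↦ {n : ℤ | g ∉ fixedSubgroup R ∧ (R ^ n) g = f}) fun g _ ↦ ?_).subset ?_
  · refine Set.Subsingleton.finite fun i ⟨hg, hi⟩ j ⟨_, hj⟩ ↦ ?_
    exact zpow_apply_injective (fun n hn hgn ↦ hg (hR n hn hgn)) (hi.trans hj.symm)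
  · rintro n ⟨g, hgx, hgf : (R ^ n) g = f⟩
    have hgk : g ^ k = f ^ k := by
      rw [← hgf, ← map_pow]
      exact (fixedSubgroup_le_fixedSubgroup_zpow R n (hpow g)).symm
    have hg : g ∉ fixedSubgroup R := fun hg ↦ by
      have hgg : (R ^ n) g = g := fixedSubgroup_le_fixedSubgroup_zpow R n hg
      obtain rfl : g = f := hgg.symm.trans hgf
      exact hf ⟨hgx, hg⟩
    exact Set.mem_biUnion ⟨hgx, hgk⟩ ⟨hg, hgf⟩

theorem tendsto_autMap_zpowers {R : MulAut G} [(fixedSubgroup R).FiniteIndex]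
    (hR : ∀ n : ℤ, n ≠ 0 → fixedSubgroup (R ^ n) ≤ fixedSubgroup R) (x : G) :
    Tendsto (fun n : ℤ ↦ autMap R n (Subgroup.zpowers x)) cofinite
      (𝓝 (Subgroup.zpowers x ⊓ fixedSubgroup R)) := by
  refine tendsto_nhds_subgroup_iff.mpr fun f ↦ ?_
  by_cases hf : f ∈ Subgroup.zpowers x ⊓ fixedSubgroup R
  · exact .of_forall fun n ↦ iff_of_true (mem_autMap_of_mem_fixedSubgroup hf.1 hf.2 n) hf
  · filter_upwards [(finite_setOf_mem_autMap_zpowers hR hf).eventually_cofinite_notMem] with n hn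
    exact iff_of_false hn hf

theorem ActsDistallyOn.eq_one {R : MulAut G} [(fixedSubgroup R).FiniteIndex]
    (hd : ActsDistallyOn R (cyclicSubgroups G))
    (hR : ∀ n : ℤ, n ≠ 0 → fixedSubgroup (R ^ n) ≤ fixedSubgroup R) : R = 1 := by
  ext x
  change x ∈ fixedSubgroup R
  by_contra hx
  let A := Subgroup.zpowers x
  let B := A ⊓ fixedSubgroup R
  have hA : A ∈ cyclicSubgroups G := ⟨x, rfl⟩
  have hB : B ∈ cyclicSubgroups G := mem_cyclicSubgroups_of_le hA inf_le_left
  have hAB : A ≠ B := fun h ↦ hx (inf_eq_left.mp h.symm (Subgroup.mem_zpowers x))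
  have hlim : Tendsto (fun n : ℤ ↦ (autMap R n A, autMap R n B)) cofinite (𝓝 (B, B)) :=
    (tendsto_autMap_zpowers hR x).prodMk_nhds <| tendsto_const_nhds.congr fun n ↦
      (autMap_eq_self_of_le_fixedSubgroup inf_le_right n).symm
  exact hd A hA B hB hAB B hB (mem_closure_of_tendsto hlim (.of_forall Set.mem_range_self))

theorem finite_orbitPairs {T : MulAut G} (hT : IsOfFinOrder T) (A B : Subgroup G) :
    (orbitPairs T A B).Finite := by
  refine ((finite_zpowers.mpr hT).image fun S : MulAut G ↦
    (A.map S.toMonoidHom, B.map S.toMonoidHom)).subset ?_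
  rintro _ ⟨n, rfl⟩
  exact ⟨T ^ n, ⟨n, rfl⟩, rfl⟩

theorem actsDistallyOn_of_isOfFinOrder {T : MulAut G} (hT : IsOfFinOrder T)
    (Y : Set (Subgroup G)) : ActsDistallyOn T Y := by
  intro A _ B _ hAB C _ hC
  rw [(finite_orbitPairs hT A B).isClosed.closure_eq] at hC
  obtain ⟨n, hn⟩ := hC
  obtain ⟨hnA, hnB⟩ := Prod.ext_iff.mp hn
  exact hAB (Subgroup.map_injective (T ^ n).injective (hnA.trans hnB.symm))

theorem actsDistallyOn_cyclicSubgroups_iff_isOfFinOrder (T : MulAut G)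
    [(fixedSubgroup T).FiniteIndex] :
    ActsDistallyOn T (cyclicSubgroups G) ↔ IsOfFinOrder T := by
  refine ⟨fun hd ↦ ?_, fun hT ↦ actsDistallyOn_of_isOfFinOrder hT _⟩
  obtain ⟨m, hm, hper⟩ := exists_pow_forall_fixedSubgroup_zpow_le T
  have : (fixedSubgroup (T ^ m)).FiniteIndex :=
    Subgroup.finiteIndex_of_le (fixedSubgroup_le_fixedSubgroup_pow T m)
  exact isOfFinOrder_iff_pow_eq_one.mpr ⟨m, hm, (hd.pow m).eq_one hper⟩

end Distal

theorem distal_on_cyclicSubgroups_iff_finite_order_general {G : Type*} [Group G]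
    (T : MulAut G) (H : Subgroup G) [H.FiniteIndex] (hid : ∀ h ∈ H, T h = h)
    (hcl : IsClosed (cyclicSubgroups H)) :
    IsClosed (cyclicSubgroups G) ∧
    (ActsDistallyOn T (cyclicSubgroups G) ↔ ∃ m : ℕ, 0 < m ∧ T ^ m = 1) := by
  have : (fixedSubgroup T).FiniteIndex := Subgroup.finiteIndex_of_le hid
  exact ⟨isClosed_cyclicSubgroups_of_finiteIndex H hcl,
    (actsDistallyOn_cyclicSubgroups_iff_isOfFinOrder T).trans isOfFinOrder_iff_pow_eq_one⟩

/-- if `T` restricts to the identity on a finite-index normal subgroup `H`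
with finitely generated center and `Sub^c_H` is closed, then `Sub^c_G` is closed and `T`
acts distally on `Sub^c_G` iff `T^m = Id` for some `m ≥ 1`. -/
theorem distal_on_cyclicSubgroups_iff_finite_order {G : Type*} [Group G] (T : MulAut G)
    (H : Subgroup G) [H.Normal] (hfi : H.FiniteIndex) (hid : ∀ h ∈ H, T h = h)
    (hfg : Group.FG ↥(H ⊓ Subgroup.centralizer (H : Set G)))
    (hcl : IsClosed (cyclicSubgroups ↥H)) :
    IsClosed (cyclicSubgroups G) ∧
    (ActsDistallyOn T (cyclicSubgroups G) ↔ ∃ m : ℕ, 0 < m ∧ T ^ m = 1) :=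
  haveI := hfi
  distal_on_cyclicSubgroups_iff_finite_order_general T H hid hcl
end

section
/- Let G be an infinite discrete polycyclic group and let T be an automorphism of G. Then the action of T on Sub^c_G is not expansive. -/
/-!
The subgroups `⟨g ^ m⟩` tend to the trivial subgroup as `m → ∞`, uniformly over all `g` of infinite
order, as soon as every element of infinite order is an `m`-th power for finitely many `m` only. The
infinite-order elements being permuted by automorphisms, the whole orbit of `⟨x ^ m⟩` then stays as
close to `{e}` as we like, for any `x` of infinite order and `m` large. In a polycyclic group the
roots of a given element are controlled by climbing the subnormal series, where the point is that
the torsion of each cyclic factor has bounded exponent.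
-/

open Filter Topology

universe u

section Chabauty

variable {G : Type*} [Group G]

theorem tendsto_nhds_bot_iff_eventually_notMem {α : Type*} {l : Filter α} {H : α → Subgroup G} :
    Tendsto H l (𝓝 ⊥) ↔ ∀ f : G, f ≠ 1 → ∀ᶠ a in l, f ∉ H a := by
  refine TopologicalSpace.tendsto_nhds_generateFrom_iff.trans ⟨fun h f hf ↦ ?_, fun h ↦ ?_⟩
  · have hmiss := h _ (.inl ⟨{f}, Set.finite_singleton f, rfl⟩) (by simpa using hf)
    filter_upwards [hmiss] with a ha
    simpa using ha
  · rintro _ (⟨K, hK, rfl⟩ | ⟨U, rfl⟩) hbot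
    · have h_one : (1 : G) ∉ K := by simpa using hbot
      have hmiss : ∀ᶠ a in l, ∀ f ∈ K, f ∉ H a :=
        (eventually_all_finite hK).2 fun f hf ↦ h f (ne_of_mem_of_not_mem hf h_one)
      filter_upwards [hmiss] with a ha
      exact Set.disjoint_iff_inter_eq_empty.1 (Set.disjoint_right.2 ha)
    · have h_one : (1 : G) ∈ U := by simpa using hbot
      exact Eventually.of_forall fun a ↦ ⟨1, (H a).one_mem, h_one⟩

@[simp]
theorem autMap_bot (T : MulAut G) (n : ℤ) : autMap T n ⊥ = ⊥ :=
  Subgroup.map_bot _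

theorem autMap_zpowers (T : MulAut G) (n : ℤ) (g : G) :
    autMap T n (Subgroup.zpowers g) = Subgroup.zpowers ((T ^ n) g) :=
  MonoidHom.map_zpowers _ _

end Chabauty

section Torsion

variable {G : Type*} [Group G]

theorem isOfFinOrder_zpow_iff {g : G} {k : ℤ} :
    IsOfFinOrder (g ^ k) ↔ IsOfFinOrder g ∨ k = 0 := by
  obtain ⟨j, rfl | rfl⟩ := k.eq_nat_or_neg <;> simp [isOfFinOrder_pow]

/-- The torsion elements of `G`, which need not form a subgroup, have bounded order; this is phrased
as a common exponent. For a quotient `G ⧸ N` it gives one `e` with `y ^ e ∈ N` for all `y` that are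
torsion modulo `N`, and this moves root extraction from `G` into `N`. -/
def HasBoundedTorsion (G : Type*) [Group G] : Prop :=
  ∃ e : ℕ, e ≠ 0 ∧ ∀ g : G, IsOfFinOrder g → g ^ e = 1

/-- Each element of infinite order is an `m`-th power for only finitely many `m`, so that for large
`m` no `m`-th power of infinite order lies in a given finite set. Elements of finite order must be
excluded: `f = f ^ (1 + k * orderOf f)` for every `k`. -/
def HasFiniteRootExponents (G : Type*) [Group G] : Prop :=
  ∀ f : G, ¬ IsOfFinOrder f → {m : ℕ | ∃ y : G, y ^ m = f}.Finite

theorem hasBoundedTorsion_of_isCyclic [IsCyclic G] : HasBoundedTorsion G := by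
  cases finite_or_infinite G with
  | inl _ => exact ⟨Nat.card G, Nat.card_pos.ne', fun g _ ↦ pow_card_eq_one'⟩
  | inr _ =>
    obtain ⟨c, hc⟩ := IsCyclic.exists_generator (α := G)
    have hc_inf : ¬ IsOfFinOrder c :=
      orderOf_eq_zero_iff.1 (Infinite.orderOf_eq_zero_of_forall_mem_zpowers hc)
    refine ⟨1, one_ne_zero, fun g hg ↦ ?_⟩
    obtain ⟨k, rfl⟩ := hc g
    have hk : k = 0 := (isOfFinOrder_zpow_iff.1 hg).resolve_left hc_inf
    simp [hk]

theorem hasFiniteRootExponents_of_isCyclic [IsCyclic G] : HasFiniteRootExponents G := by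
  obtain ⟨c, hc⟩ := IsCyclic.exists_zpow_surjective (G := G)
  intro f hf
  obtain ⟨a, rfl⟩ := hc f
  obtain ⟨hc_inf, ha⟩ : ¬ IsOfFinOrder c ∧ a ≠ 0 := by
    simpa [isOfFinOrder_zpow_iff, not_or] using hf
  refine (Set.finite_Iic a.natAbs).subset ?_
  rintro m ⟨y, hy⟩
  obtain ⟨k, rfl⟩ := hc y
  have hkm : k * m = a :=
    injective_zpow_iff_not_isOfFinOrder.2 hc_inf (by simpa [zpow_mul] using hy)
  exact Nat.le_of_dvd (Int.natAbs_pos.2 ha) (Int.natCast_dvd.1 (Dvd.intro_left k hkm))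

theorem finite_of_isCyclic_of_isMulTorsion [IsCyclic G] (hG : IsMulTorsion G) : Finite G := by
  obtain ⟨c, hc⟩ := IsCyclic.exists_generator (α := G)
  exact Set.finite_univ_iff.1 ((finite_zpowers.2 (hG c)).subset fun g _ ↦ hc g)

end Torsion

section Extension

variable {N G Q : Type*} [Group N] [Group G] [Group Q] {ι : N →* G} {π : G →* Q}

theorem finite_of_mulExact [Finite N] [Finite Q] (hexact : Function.MulExact ι π) : Finite G := by
  rw [π.finite_iff_finite_ker_range, MonoidHom.mulExact_iff.1 hexact]
  exact ⟨Set.finite_range ι, inferInstance⟩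

theorem HasFiniteRootExponents.of_mulExact (hι : Function.Injective ι)
    (hexact : Function.MulExact ι π) (hN : HasFiniteRootExponents N)
    (hQ : HasFiniteRootExponents Q) (hQ_tors : HasBoundedTorsion Q) :
    HasFiniteRootExponents G := by
  intro f hf
  by_cases hπf : IsOfFinOrder (π f)
  · obtain ⟨e, he, hexp⟩ := hQ_tors
    have pow_mem_range (g : G) (hg : IsOfFinOrder (π g)) : g ^ e ∈ Set.range ι :=
      (hexact _).1 (by rw [map_pow, hexp _ hg])
    obtain ⟨n, hn⟩ := pow_mem_range f hπf
    have hn_inf : ¬ IsOfFinOrder n := by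
      rw [← hι.isOfFinOrder_iff, hn, isOfFinOrder_pow]
      exact not_or_intro hf he
    refine (hN n hn_inf).subset ?_
    rintro m ⟨y, rfl⟩
    have hm : m ≠ 0 := fun h ↦ hf (isOfFinOrder_pow.2 (.inr h))
    rw [map_pow, isOfFinOrder_pow] at hπf
    obtain ⟨z, hz⟩ := pow_mem_range y (hπf.resolve_right hm)
    exact ⟨z, hι (by rw [map_pow, hz, hn, pow_right_comm])⟩
  · exact (hQ _ hπf).subset fun m ⟨y, hy⟩ ↦ ⟨π y, by rw [← map_pow, hy]⟩

end Extension

section Polycyclic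

theorem IsPolycyclic.induction {motive : ∀ (G : Type u) [Group G], Prop}
    (subsingleton : ∀ (G : Type u) [Group G] [Subsingleton G], motive G)
    (extension : ∀ {N G Q : Type u} [Group N] [Group G] [Group Q] [IsCyclic Q]
      {ι : N →* G} {π : G →* Q}, Function.Injective ι → Function.MulExact ι π →
      Function.Surjective π → motive N → motive G)
    {G : Type u} [Group G] (hG : IsPolycyclic G) : motive G := by
  obtain ⟨k, s, h_top, h_bot, hs⟩ := hG
  have motive_series (i : Fin (k + 1)) : motive (s i) := by
    induction i using Fin.reverseInduction with
    | last => rw [h_bot]; exact subsingleton _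
    | cast i ih =>
      obtain ⟨hle, _, _⟩ := hs i
      refine extension (Subgroup.inclusion_injective hle) ?_
        (QuotientGroup.mk'_surjective ((s i.succ).subgroupOf (s i.castSucc))) ih
      rw [MonoidHom.mulExact_iff, QuotientGroup.ker_mk', Subgroup.inclusion_range]
  -- `⊤` and `G` are different types; the passage is an extension with trivial quotient.
  refine extension (ι := (s 0).subtype) (π := (1 : G →* PUnit)) (s 0).subtype_injective ?_
    (Function.surjective_to_subsingleton _) (motive_series 0)
  rw [MonoidHom.mulExact_iff, MonoidHom.ker_one, Subgroup.range_subtype, h_top]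

variable {G : Type*} [Group G]

theorem IsPolycyclic.hasFiniteRootExponents (hG : IsPolycyclic G) : HasFiniteRootExponents G :=
  hG.induction (fun _ ↦ hasFiniteRootExponents_of_isCyclic) fun hι hexact _ hN ↦
    hN.of_mulExact hι hexact hasFiniteRootExponents_of_isCyclic hasBoundedTorsion_of_isCyclic

theorem IsPolycyclic.finite_of_isMulTorsion (hG : IsPolycyclic G) : IsMulTorsion G → Finite G := by
  refine hG.induction (motive := fun G _ ↦ IsMulTorsion G → Finite G)
    (fun _ _ _ _ ↦ inferInstance) ?_
  intro N G Q _ _ _ _ ι π hι hexact hπ ih hG_tors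
  have : Finite N := ih fun n ↦ hι.isOfFinOrder_iff.1 (hG_tors (ι n))
  have : Finite Q := finite_of_isCyclic_of_isMulTorsion (hG_tors.of_surjective hπ)
  exact finite_of_mulExact hexact

end Polycyclic

section Expansivity

variable {G : Type*} [Group G]

theorem HasFiniteRootExponents.tendsto_zpowers_pow (hG : HasFiniteRootExponents G) :
    Tendsto (fun p : ℕ × {g : G // ¬ IsOfFinOrder g} ↦ Subgroup.zpowers ((p.2 : G) ^ p.1))
      (atTop ×ˢ ⊤) (𝓝 ⊥) := by
  rw [tendsto_nhds_bot_iff_eventually_notMem]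
  intro f hf
  rw [prod_top, eventually_comap]
  by_cases hf_fin : IsOfFinOrder f
  · refine Eventually.of_forall ?_
    rintro _ ⟨m, g, hg⟩ - hfg
    obtain ⟨k, rfl⟩ := Subgroup.zpowers_le.2 (Subgroup.pow_mem _ (Subgroup.mem_zpowers g) m) hfg
    have hk : k = 0 := (isOfFinOrder_zpow_iff.1 hf_fin).resolve_left hg
    simp [hk] at hf
  · have hroots := (hG f hf_fin).eventually_cofinite_notMem
    rw [Nat.cofinite_eq_atTop] at hroots
    filter_upwards [hroots]
    rintro _ hm ⟨m, g, hg⟩ rfl ⟨k, hk⟩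
    exact hm ⟨g ^ k, by simpa [← zpow_natCast, zpow_comm] using hk⟩

theorem polycyclic_no_expansive_general (hroots : HasFiniteRootExponents G)
    (htors : ¬ IsMulTorsion G) (T : MulAut G) : ¬ ActsExpansivelyOn T (cyclicSubgroups G) := by
  rintro ⟨W, hW, hdiag, hexp⟩
  obtain ⟨x, hx⟩ := (not_isMulTorsion_iff G).1 htors
  have hbot : (⊥ : Subgroup G) ∈ cyclicSubgroups G := ⟨1, Subgroup.zpowers_one_eq_bot.symm⟩
  have hW_nhds : ∀ᶠ H : Subgroup G in 𝓝 ⊥, (H, ⊥) ∈ W :=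
    (hW.preimage (.prodMk_left ⊥)).mem_nhds (hdiag ⊥ hbot)
  have hclose := hroots.tendsto_zpowers_pow.eventually hW_nhds
  rw [prod_top, eventually_comap] at hclose
  obtain ⟨m, hm_close, hm⟩ := (hclose.and (eventually_ne_atTop 0)).exists
  have hxm : Subgroup.zpowers (x ^ m) ≠ ⊥ := by
    rw [Ne, Subgroup.zpowers_eq_bot]
    exact fun h ↦ hx (isOfFinOrder_iff_pow_eq_one.2 ⟨m, hm.bot_lt, h⟩)
  obtain ⟨n, hn⟩ := hexp _ ⟨x ^ m, rfl⟩ ⊥ hbot hxm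
  have hTx : ¬ IsOfFinOrder ((T ^ n) x) :=
    mt ((T ^ n).injective.isOfFinOrder_iff (f := (T ^ n).toMonoidHom)).1 hx
  rw [autMap_bot, autMap_zpowers, map_pow] at hn
  exact hn (hm_close (m, ⟨_, hTx⟩) rfl)

end Expansivity

/-- no automorphism of an infinite discrete polycyclic group acts
expansively on `Sub^c_G`. -/
theorem polycyclic_no_expansive {G : Type*} [Group G] (hpoly : IsPolycyclic G)
    (hinf : Infinite G) (T : MulAut G) :
    ¬ ActsExpansivelyOn T (cyclicSubgroups G) :=
  polycyclic_no_expansive_general hpoly.hasFiniteRootExponents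
    (fun h ↦ hinf.not_finite (hpoly.finite_of_isMulTorsion h)) T
end
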